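/- arXiv:2203.01789 — 4 statements merged into one kernel-verified Lean document; each statement's English description precedes it below -/
import Mathlib

section
/- Correctness of the logarithmic-depth CNOT-cascade scheme for a 4-qubit Pauli measurement: let C₁, C₂, C₃, C₄ be arbitrary 2×2 complex matrices and set σᵢ = Cᵢ† Z Cᵢ. Define on (ℂ²)^{⊗4} the operator W = CX_{2,4} · (CX ⊗ CX) · (C₁ ⊗ C₂ ⊗ C₃ ⊗ C₄), where CX is the 4×4 CNOT matrix (first factor control, second target) and CX_{2,4} = I₂ ⊗ ( |0⟩⟨0| ⊗ I₂ ⊗ I₂ + |1⟩⟨1| ⊗ I₂ ⊗ X ) is the CNOT with control on qubit 2 and target on qubit 4. Then W† (I₂ ⊗ I₂ ⊗ I₂ ⊗ Z) W = σ₁ ⊗ σ₂ ⊗ σ₃ ⊗ σ₄; i.e., conjugating the single-qubit Z measurement of the fourth qubit back through the cascade circuit yields the 4-qubit Pauli observable σ₁ ⊗ σ₂ ⊗ σ₃ ⊗ σ₄. -/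
open Matrix

noncomputable section

/-- Pauli `X`. -/
def Xg : Matrix (Fin 2) (Fin 2) ℂ := !![0, 1; 1, 0]

/-- Pauli `Z`. -/
def Zg : Matrix (Fin 2) (Fin 2) ℂ := !![1, 0; 0, -1]

/-- The index type of four qubits. -/
abbrev Q4 := Fin 2 × Fin 2 × Fin 2 × Fin 2

/-- Kronecker product of four 2×2 matrices, as a matrix on four qubits. -/
def kron4 (A B C D : Matrix (Fin 2) (Fin 2) ℂ) : Matrix Q4 Q4 ℂ :=
  fun x y => A x.1 y.1 * B x.2.1 y.2.1 * C x.2.2.1 y.2.2.1 * D x.2.2.2 y.2.2.2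

/-- The CNOT gate on `ℂ² ⊗ ℂ²` (first factor control, second target). -/
def CX : Matrix (Fin 2 × Fin 2) (Fin 2 × Fin 2) ℂ :=
  fun q p => if q.1 = p.1 ∧ q.2 = p.1 + p.2 then 1 else 0

/-- `CX ⊗ CX`: simultaneous CNOTs on qubits (1,2) and (3,4). -/
def CXCX : Matrix Q4 Q4 ℂ :=
  fun x y => CX (x.1, x.2.1) (y.1, y.2.1) * CX (x.2.2.1, x.2.2.2) (y.2.2.1, y.2.2.2)

/-- `CX_{2,4} = I₂ ⊗ (|0⟩⟨0| ⊗ I₂ ⊗ I₂ + |1⟩⟨1| ⊗ I₂ ⊗ X)`: CNOT with control on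
qubit 2 and target on qubit 4. -/
def CX24 : Matrix Q4 Q4 ℂ :=
  fun x y =>
    (1 : Matrix (Fin 2) (Fin 2) ℂ) x.1 y.1 *
      ((!![1, 0; 0, 0] : Matrix (Fin 2) (Fin 2) ℂ) x.2.1 y.2.1 *
          (1 : Matrix (Fin 2) (Fin 2) ℂ) x.2.2.1 y.2.2.1 *
          (1 : Matrix (Fin 2) (Fin 2) ℂ) x.2.2.2 y.2.2.2 +
        (!![0, 0; 0, 1] : Matrix (Fin 2) (Fin 2) ℂ) x.2.1 y.2.1 *
          (1 : Matrix (Fin 2) (Fin 2) ℂ) x.2.2.1 y.2.2.1 *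
          Xg x.2.2.2 y.2.2.2)

/-- The permutation of basis states performed by `CX ⊗ CX`. -/
def cascadeF (y : Q4) : Q4 := (y.1, y.1 + y.2.1, y.2.2.1, y.2.2.1 + y.2.2.2)

/-- The permutation of basis states performed by `CX_{2,4}`. -/
def cascadeG (y : Q4) : Q4 := (y.1, y.2.1, y.2.2.1, y.2.1 + y.2.2.2)

theorem kron4_mul (A B C D A2 B2 C2 D2 : Matrix (Fin 2) (Fin 2) ℂ) :
    kron4 A B C D * kron4 A2 B2 C2 D2 = kron4 (A * A2) (B * B2) (C * C2) (D * D2) := by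
  ext x y
  simp only [kron4, Matrix.mul_apply, Fintype.sum_prod_type, Fin.sum_univ_two]
  ring

theorem kron4_conjTranspose (A B C D : Matrix (Fin 2) (Fin 2) ℂ) :
    (kron4 A B C D)ᴴ = kron4 Aᴴ Bᴴ Cᴴ Dᴴ := by
  ext x y
  simp [kron4, Matrix.conjTranspose_apply]

theorem perm_conj (P : Matrix Q4 Q4 ℂ) (f : Q4 → Q4) (hf : Function.Injective f)
    (hP : ∀ x y, P x y = if x = f y then 1 else 0) (d : Q4 → ℂ) :
    Pᴴ * Matrix.diagonal d * P = Matrix.diagonal (fun y => d (f y)) := by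
  ext x y
  rw [Matrix.mul_apply]
  simp only [Matrix.mul_diagonal, Matrix.conjTranspose_apply, hP, mul_ite, mul_one, mul_zero,
    Finset.sum_ite_eq', Finset.mem_univ, if_true, Matrix.diagonal_apply]
  by_cases h : x = y
  · subst h; simp
  · have h2 : f y ≠ f x := fun e => h (hf e).symm
    simp [h, h2]

theorem CXCX_apply_eq (x y : Q4) : CXCX x y = if x = cascadeF y then 1 else 0 := by
  obtain ⟨a, b, c, d⟩ := x
  obtain ⟨a2, b2, c2, d2⟩ := y
  simp only [CXCX, CX, cascadeF, Prod.mk.injEq, ← ite_and, mul_ite, mul_one, mul_zero]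
  congr 1
  apply propext
  tauto

theorem CX24_apply_eq (x y : Q4) : CX24 x y = if x = cascadeG y then 1 else 0 := by
  obtain ⟨a, b, c, d⟩ := x
  obtain ⟨a2, b2, c2, d2⟩ := y
  simp only [CX24, cascadeG, Prod.mk.injEq, Matrix.one_apply, Xg]
  by_cases h1 : a = a2 <;> by_cases h3 : c = c2 <;> simp only [h1, h3] <;>
    fin_cases b <;> fin_cases b2 <;> fin_cases d <;> fin_cases d2 <;> simp

/-- The sign of a basis state of one qubit. -/
def zsign (a : Fin 2) : ℂ := Zg a a

theorem Zg_eq : Zg = Matrix.diagonal zsign := by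
  ext i j
  fin_cases i <;> fin_cases j <;> simp [Zg, zsign]

theorem zsign_add (a b : Fin 2) : zsign (a + b) = zsign a * zsign b := by
  fin_cases a <;> fin_cases b <;> simp [zsign, Zg]

theorem kron4_diagonal (a b c d : Fin 2 → ℂ) :
    kron4 (Matrix.diagonal a) (Matrix.diagonal b) (Matrix.diagonal c) (Matrix.diagonal d) =
      Matrix.diagonal (fun y : Q4 => a y.1 * b y.2.1 * c y.2.2.1 * d y.2.2.2) := by
  ext ⟨x1, x2, x3, x4⟩ ⟨y1, y2, y3, y4⟩
  simp only [kron4, Matrix.diagonal_apply, Prod.mk.injEq]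
  by_cases h1 : x1 = y1 <;> by_cases h2 : x2 = y2 <;> by_cases h3 : x3 = y3 <;>
    by_cases h4 : x4 = y4 <;> simp [h1, h2, h3, h4]

theorem cascade_core :
    CXCXᴴ * (CX24ᴴ * kron4 1 1 1 Zg * CX24) * CXCX = kron4 Zg Zg Zg Zg := by
  have hF : Function.Injective cascadeF := by
    rintro ⟨a, b, c, d⟩ ⟨a2, b2, c2, d2⟩ h
    simp only [cascadeF, Prod.mk.injEq] at h
    obtain ⟨rfl, h2, rfl, h4⟩ := h
    rw [add_left_cancel h2, add_left_cancel h4]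
  have hG : Function.Injective cascadeG := by
    rintro ⟨a, b, c, d⟩ ⟨a2, b2, c2, d2⟩ h
    simp only [cascadeG, Prod.mk.injEq] at h
    obtain ⟨rfl, rfl, rfl, h4⟩ := h
    rw [add_left_cancel h4]
  rw [Zg_eq, ← Matrix.diagonal_one, kron4_diagonal, kron4_diagonal,
    perm_conj _ _ hG CX24_apply_eq, perm_conj _ _ hF CXCX_apply_eq]
  congr 1
  funext y
  simp only [cascadeF, cascadeG, zsign_add]
  ring

/-- Correctness of the logarithmic-depth CNOT-cascade scheme for a 4-qubit Pauli
measurement: with `W = CX_{2,4} · (CX ⊗ CX) · (C₁ ⊗ C₂ ⊗ C₃ ⊗ C₄)` and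
`σᵢ = Cᵢ† Z Cᵢ`, conjugating the single-qubit `Z` measurement of the fourth qubit
back through the cascade yields `W† (I ⊗ I ⊗ I ⊗ Z) W = σ₁ ⊗ σ₂ ⊗ σ₃ ⊗ σ₄`. -/
theorem cnot_cascade_pauli_measurement
    (C₁ C₂ C₃ C₄ : Matrix (Fin 2) (Fin 2) ℂ) :
    (CX24 * CXCX * kron4 C₁ C₂ C₃ C₄)ᴴ * kron4 1 1 1 Zg *
        (CX24 * CXCX * kron4 C₁ C₂ C₃ C₄) =
      kron4 (C₁ᴴ * Zg * C₁) (C₂ᴴ * Zg * C₂) (C₃ᴴ * Zg * C₃) (C₄ᴴ * Zg * C₄) := by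
  rw [← kron4_mul, ← kron4_mul, ← kron4_conjTranspose, ← cascade_core]
  simp only [Matrix.conjTranspose_mul, Matrix.mul_assoc]

end
end

section
/- Correctness of the GHZ-assisted constant-depth Pauli-measurement scheme: let t ≥ 1, d ≥ 1, and let P be a d×d complex matrix. Index the auxiliary register by bit strings x ∈ {0,1}^t and let (Q_x) be any family of d×d matrices with Q_{00…0} = I and Q_{11…1} = P; set U = Σ_x |x⟩⟨x| ⊗ Q_x on ℂ^{2^t} ⊗ ℂ^d (this captures the layer of controlled single-qubit operations whose product over the all-ones string is P). Let GHZ_t = (|0…0⟩ + |1…1⟩)/√2 and let H^{⊗t} be the 2^t × 2^t matrix with entries (H^{⊗t})_{x,y} = 2^{−t/2} (−1)^{x·y}, where x·y = Σᵢ xᵢyᵢ. Then for every ψ ∈ ℂ^d and every outcome string x ∈ {0,1}^t: ((⟨x| H^{⊗t}) ⊗ I) · U · (GHZ_t ⊗ ψ) = 2^{−(t−1)/2} · (1/2)(I + (−1)^{x₁⊕…⊕x_t} P) ψ; i.e., after Hadamards and computational-basis measurements of all t auxiliary qubits with outcomes x, the main register is left (up to normalization) in the projection of ψ onto the (−1)^s-eigenspace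 of P, where s = x₁⊕…⊕x_t is the parity of the outcomes. -/
open Matrix

noncomputable section

/-- The GHZ state `(|0…0⟩ + |1…1⟩)/√2` on `t` qubits, as a vector indexed by bit
strings `Fin t → Fin 2`. -/
def GHZ (t : ℕ) : (Fin t → Fin 2) → ℂ :=
  fun x =>
    ((if x = (fun _ => 0) then (1 : ℂ) else 0) + (if x = (fun _ => 1) then (1 : ℂ) else 0)) /
      ((Real.sqrt 2 : ℝ) : ℂ)

/-- The `t`-fold tensor power of the Hadamard gate, with entries
`(H^{⊗t})_{x,y} = 2^{−t/2} (−1)^{x·y}`. -/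
def Hpow (t : ℕ) : Matrix (Fin t → Fin 2) (Fin t → Fin 2) ℂ :=
  fun x y => ((((Real.sqrt 2 : ℝ) : ℂ)) ^ t)⁻¹ * ((-1 : ℂ)) ^ (∑ i, (x i : ℕ) * (y i : ℕ))

/-- The computational basis vector `|x⟩` of the `t`-qubit auxiliary register. -/
def ketStr {t : ℕ} (x : Fin t → Fin 2) : (Fin t → Fin 2) → ℂ := fun y => if y = x then 1 else 0

/-- Correctness of the GHZ-assisted constant-depth Pauli-measurement scheme: with the
layer of controlled operations `U = Σ_x |x⟩⟨x| ⊗ Q_x` where `Q_{0…0} = I` and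
`Q_{1…1} = P`, applying `U` to `GHZ_t ⊗ ψ` and projecting the auxiliary register onto
`H^{⊗t}|x⟩` leaves the main register in
`2^{−(t−1)/2} · (1/2)(I + (−1)^{x₁⊕…⊕x_t} P) ψ`. -/
theorem ghz_constant_depth_pauli_measurement
    (t d : ℕ) (ht : 1 ≤ t) (hd : 1 ≤ d)
    (P : Matrix (Fin d) (Fin d) ℂ)
    (Q : (Fin t → Fin 2) → Matrix (Fin d) (Fin d) ℂ)
    (hQ0 : Q (fun _ => 0) = 1) (hQ1 : Q (fun _ => 1) = P)
    (U : Matrix ((Fin t → Fin 2) × Fin d) ((Fin t → Fin 2) × Fin d) ℂ)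
    (hU : U = fun p q => if p.1 = q.1 then Q p.1 p.2 q.2 else 0)
    (ψ : Fin d → ℂ) (x : Fin t → Fin 2) :
    (fun i : Fin d =>
        ∑ y : Fin t → Fin 2, star ((Hpow t *ᵥ ketStr x) y) *
          (U *ᵥ fun p : (Fin t → Fin 2) × Fin d => GHZ t p.1 * ψ p.2) (y, i)) =
      ((((Real.sqrt 2 : ℝ) : ℂ)) ^ (t - 1))⁻¹ •
        (1 / 2 : ℂ) • ((1 + ((-1 : ℂ)) ^ (∑ i, (x i : ℕ)) • P) *ᵥ ψ) := by
  have hH : ∀ y, (Hpow t *ᵥ ketStr x) y = Hpow t y x := by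
    intro y
    simp [Matrix.mulVec, dotProduct, ketStr]
  have hUv : ∀ y i, (U *ᵥ fun p : (Fin t → Fin 2) × Fin d => GHZ t p.1 * ψ p.2) (y, i)
      = GHZ t y * (Q y *ᵥ ψ) i := by
    intro y i
    subst hU
    simp only [Matrix.mulVec, dotProduct, Fintype.sum_prod_type]
    rw [Finset.sum_eq_single y]
    · simp only [if_true, Finset.mul_sum]
      exact Finset.sum_congr rfl fun j _ => by ring
    · intro b _ hb
      simp [Ne.symm hb]
    · simp
  funext i
  simp only [hH, hUv]
  have hsplit : ∀ y : Fin t → Fin 2, star (Hpow t y x) * (GHZ t y * (Q y *ᵥ ψ) i) =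
      (if y = (fun _ => 0) then
        star (Hpow t y x) * ((Q y *ᵥ ψ) i / ((Real.sqrt 2 : ℝ) : ℂ)) else 0) +
      (if y = (fun _ => 1) then
        star (Hpow t y x) * ((Q y *ᵥ ψ) i / ((Real.sqrt 2 : ℝ) : ℂ)) else 0) := by
    intro y
    unfold GHZ
    split_ifs <;> ring
  rw [Finset.sum_congr rfl fun y _ => hsplit y, Finset.sum_add_distrib,
    Finset.sum_ite_eq' , Finset.sum_ite_eq', hQ0, hQ1]
  have hs : ((Real.sqrt 2 : ℝ) : ℂ) * ((Real.sqrt 2 : ℝ) : ℂ) = 2 := by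
    rw [← Complex.ofReal_mul, Real.mul_self_sqrt (by norm_num)]
    norm_num
  have hne : ((Real.sqrt 2 : ℝ) : ℂ) ≠ 0 := by
    intro h
    rw [h] at hs
    norm_num at hs
  obtain ⟨k, rfl⟩ : ∃ k, t = k + 1 := ⟨t - 1, by omega⟩
  have h0 : star (Hpow (k + 1) (fun _ => 0) x) = ((((Real.sqrt 2 : ℝ) : ℂ)) ^ (k + 1))⁻¹ := by
    simp [Hpow]
  have h1 : star (Hpow (k + 1) (fun _ => 1) x) =
      ((((Real.sqrt 2 : ℝ) : ℂ)) ^ (k + 1))⁻¹ * (-1) ^ (∑ i, (x i : ℕ)) := by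
    simp [Hpow]
  rw [h0, h1]
  simp only [Finset.mem_univ, if_true, Nat.add_sub_cancel, Matrix.add_mulVec, Matrix.one_mulVec,
    Matrix.smul_mulVec, Pi.smul_apply, Pi.add_apply, smul_eq_mul]
  rw [← hs, pow_succ]
  field_simp

end
end

section
/- Unbiasedness and boundedness of the importance-sampled hybrid-PBC estimator: let M ∈ ℕ, α : Fin M → ℝ with each αᵢ ≠ 0 and Σᵢ αᵢ = 1, and let pᵢ ∈ [0,1] for each i. Set L = ‖α‖₁ = Σᵢ |αᵢ|, πᵢ = |αᵢ|/L, and for i ∈ Fin M and y ∈ {0,1} define η(i,y) = 1/2 − (1/2)·sgn(αᵢ)·(−1)^y·L. Then the expectation of η under the distribution that samples i with probability πᵢ and then y with P(y=1) = pᵢ equals the target probability: Σᵢ πᵢ (pᵢ η(i,1) + (1−pᵢ) η(i,0)) = Σᵢ αᵢ pᵢ. Moreover every value of η lies in the interval [(1 − L)/2, (1 + L)/2]. -/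
/-- Unbiasedness and boundedness of the importance-sampled hybrid-PBC estimator: with
`L = ‖α‖₁`, `πᵢ = |αᵢ|/L` and `η(i,y) = 1/2 − (1/2)·sgn(αᵢ)·(−1)^y·L`, the expectation
of `η` under the distribution sampling `i` with probability `πᵢ` and then `y` with
`P(y=1) = pᵢ` equals `Σᵢ αᵢ pᵢ`, and every value of `η` lies in
`[(1 − L)/2, (1 + L)/2]`. -/
theorem importance_sampled_hybrid_pbc_estimator
    (M : ℕ) (α : Fin M → ℝ) (hα : ∀ i, α i ≠ 0) (hsum : ∑ i, α i = 1)
    (p : Fin M → ℝ) (hp : ∀ i, p i ∈ Set.Icc (0 : ℝ) 1) :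
    (∑ i, (|α i| / (∑ j, |α j|)) *
        (p i * (1 / 2 - (1 / 2) * Real.sign (α i) * ((-1 : ℝ)) ^ (1 : ℕ) * (∑ j, |α j|)) +
          (1 - p i) *
            (1 / 2 - (1 / 2) * Real.sign (α i) * ((-1 : ℝ)) ^ (0 : ℕ) * (∑ j, |α j|)))) =
      ∑ i, α i * p i ∧
    ∀ i : Fin M, ∀ y : Fin 2,
      (1 / 2 - (1 / 2) * Real.sign (α i) * ((-1 : ℝ)) ^ (y : ℕ) * (∑ j, |α j|)) ∈
        Set.Icc ((1 - ∑ j, |α j|) / 2) ((1 + ∑ j, |α j|) / 2) := by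
  have hL : 1 ≤ ∑ j, |α j| := by
    rw [← hsum]
    exact Finset.sum_le_sum fun i _ => le_abs_self _
  generalize hLdef : (∑ j, |α j|) = L at *
  have hL0 : L ≠ 0 := by linarith
  have hs : ∀ i, |α i| * Real.sign (α i) = α i := by
    intro i
    rcases lt_or_gt_of_ne (hα i) with h | h
    · rw [Real.sign_of_neg h, abs_of_neg h]; ring
    · rw [Real.sign_of_pos h, abs_of_pos h]; ring
  constructor
  · have key : ∀ i, (|α i| / L) *
        (p i * (1 / 2 - (1 / 2) * Real.sign (α i) * ((-1 : ℝ)) ^ (1 : ℕ) * L) +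
          (1 - p i) *
            (1 / 2 - (1 / 2) * Real.sign (α i) * ((-1 : ℝ)) ^ (0 : ℕ) * L)) =
        |α i| * (1 / (2 * L)) + α i * p i - α i * (1 / 2) := by
      intro i
      have e : (|α i| / L) *
        (p i * (1 / 2 - (1 / 2) * Real.sign (α i) * ((-1 : ℝ)) ^ (1 : ℕ) * L) +
          (1 - p i) *
            (1 / 2 - (1 / 2) * Real.sign (α i) * ((-1 : ℝ)) ^ (0 : ℕ) * L)) =
        |α i| * (1 / (2 * L)) + (|α i| * Real.sign (α i)) * p i
          - (|α i| * Real.sign (α i)) * (1 / 2) := by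
        field_simp
        ring
      rw [e, hs]
    rw [Finset.sum_congr rfl fun i _ => key i, Finset.sum_sub_distrib, Finset.sum_add_distrib,
      ← Finset.sum_mul, ← Finset.sum_mul, hLdef, hsum]
    field_simp
    ring
  · intro i y
    rw [Set.mem_Icc]
    rcases lt_or_gt_of_ne (hα i) with h | h
    · rw [Real.sign_of_neg h]
      fin_cases y <;> constructor <;> norm_num <;> linarith
    · rw [Real.sign_of_pos h]
      fin_cases y <;> constructor <;> norm_num <;> linarith
end

section
/- Optimality of the ℓ₁-norm √2 for single-qubit stabilizer decompositions of the magic state (robustness of magic of |A⟩ equals √2): let S₁,…,S₆ be the outer-product projectors |+⟩⟨+|, |−⟩⟨−|, |+i⟩⟨+i|, |−i⟩⟨−i|, |0⟩⟨0|, |1⟩⟨1| onto the six single-qubit pure stabilizer states, where |±⟩ = (e₀±e₁)/√2 and |±i⟩ = (e₀ ± i e₁)/√2. Then for every α : Fin 6 → ℝ with Σᵢ αᵢ Sᵢ = |A⟩⟨A|, one has Σᵢ |αᵢ| ≥ √2. -/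
open Matrix

noncomputable section

/-- Outer product `|v⟩⟨v| = v v†` of a vector of `ℂ²`. -/
def outer (v : Fin 2 → ℂ) : Matrix (Fin 2) (Fin 2) ℂ := fun i j => v i * star (v j)

/-- The magic state `|A⟩ = (e₀ + e^{iπ/4} e₁)/√2`. -/
def magicA : Fin 2 → ℂ :=
  (((Real.sqrt 2 : ℝ) : ℂ))⁻¹ • ![1, Complex.exp (Complex.I * Real.pi / 4)]

/-- The six single-qubit pure stabilizer states
`|+⟩, |−⟩, |+i⟩, |−i⟩, |0⟩, |1⟩` (eigenstates of the Pauli matrices `X, Y, Z`). -/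
def stabState : Fin 6 → (Fin 2 → ℂ) :=
  ![(((Real.sqrt 2 : ℝ) : ℂ))⁻¹ • ![1, 1],
    (((Real.sqrt 2 : ℝ) : ℂ))⁻¹ • ![1, -1],
    (((Real.sqrt 2 : ℝ) : ℂ))⁻¹ • ![1, Complex.I],
    (((Real.sqrt 2 : ℝ) : ℂ))⁻¹ • ![1, -Complex.I],
    ![1, 0],
    ![0, 1]]

/-- Optimality of the ℓ₁-norm `√2` for single-qubit stabilizer decompositions of the
magic state (robustness of magic of `|A⟩` equals `√2`): every real decomposition
`Σᵢ αᵢ |Sᵢ⟩⟨Sᵢ| = |A⟩⟨A|` over the six pure stabilizer projectors satisfies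
`Σᵢ |αᵢ| ≥ √2`. -/
theorem magic_state_robustness_lower_bound (α : Fin 6 → ℝ)
    (hdecomp : (∑ i, ((α i : ℝ) : ℂ) • outer (stabState i)) = outer magicA) :
    ∑ i, |α i| ≥ Real.sqrt 2 := by
  have h := congrFun (congrFun hdecomp 1) 0
  have hs : ((Real.sqrt 2 : ℝ) : ℂ)⁻¹ * ((Real.sqrt 2 : ℝ) : ℂ)⁻¹ = ((1 / 2 : ℝ) : ℂ) := by
    rw [← mul_inv, ← Complex.ofReal_mul, Real.mul_self_sqrt (by norm_num)]
    norm_num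
  have he : Complex.exp (Complex.I * Real.pi / 4)
      = ((Real.sqrt 2 / 2 : ℝ) : ℂ) + ((Real.sqrt 2 / 2 : ℝ) : ℂ) * Complex.I := by
    have h1 : Complex.I * Real.pi / 4 = ((Real.pi / 4 : ℝ) : ℂ) * Complex.I := by
      push_cast; ring
    rw [h1, Complex.exp_mul_I, ← Complex.ofReal_cos, ← Complex.ofReal_sin,
      Real.cos_pi_div_four, Real.sin_pi_div_four]
  have key : ((α 0 - α 1 : ℝ) : ℂ) + ((α 2 - α 3 : ℝ) : ℂ) * Complex.I
      = ((Real.sqrt 2 / 2 : ℝ) : ℂ) + ((Real.sqrt 2 / 2 : ℝ) : ℂ) * Complex.I := by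
    rw [← he]
    simp [Fin.sum_univ_succ, outer, stabState, magicA, Matrix.add_apply] at h
    push_cast at hs ⊢
    generalize ((Real.sqrt 2 : ℝ) : ℂ)⁻¹ = t at h hs
    generalize Complex.exp (Complex.I * Real.pi / 4) = w at h ⊢
    linear_combination 2 * h - 2 * (((α 0 : ℂ) - α 1) + (α 2 - α 3) * Complex.I - w) * hs
  have hr := congrArg Complex.re key
  have hi := congrArg Complex.im key
  simp at hr hi
  have e : ∑ i, |α i| = |α 0| + |α 1| + |α 2| + |α 3| + |α 4| + |α 5| := by
    simp [Fin.sum_univ_six]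
  rw [e]
  linarith [le_abs_self (α 0), neg_abs_le (α 1), le_abs_self (α 2), neg_abs_le (α 3),
    abs_nonneg (α 4), abs_nonneg (α 5)]

end
end
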